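/- Hyperlanguages of NFH_∃ are closed upward under inclusion of hyperwords: if 𝓐 is an NFH_∃, S ∈ 𝓛(𝓐), and S ⊆ S′ for a hyperword S′, then S′ ∈ 𝓛(𝓐). -/

import Mathlib

/-- The length of the longest word in a `k`-tuple of words. -/
def maxLen {α : Type} {k : ℕ} (v : Fin k → List α) : ℕ :=
  Finset.univ.sup fun i => (v i).length

/-- `zip` of a `k`-tuple of words over `α`: the word over `k`-tuples of
`Option α`, where `none` plays the role of the padding symbol `#`. Its length
is the length of the longest word, and its `j`-th letter has `i`-th component
the `j`-th letter of the `i`-th word (or `#` = `none` if that word has ended). -/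
def zipWord {α : Type} {k : ℕ} (v : Fin k → List α) : List (Fin k → Option α) :=
  (List.range (maxLen v)).map fun j i => (v i)[j]?

/-- A nondeterministic finite hyperautomaton (NFH) with `k` word variables:
an NFA over the alphabet of `k`-tuples `(Σ ∪ {#})ᵏ` together with a
quantification condition, where the `i`-th quantifier binds the `i`-th
variable (`true` = ∃, `false` = ∀). -/
structure NFH (α σ : Type) (k : ℕ) where
  quant : Fin k → Bool
  aut : NFA (Fin k → Option α) σ

/-- Satisfaction of the suffix `𝔔ᵢ₊₁xᵢ₊₁ ⋯ 𝔔ₖxₖ` of the quantification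
condition by a hyperword `S`, given a partial assignment `v` to the first `i`
variables: when all variables are assigned, the underlying NFA must accept the
zip of the assignment. -/
def NFH.SatFrom {α σ : Type} {k : ℕ} (A : NFH α σ k) (S : Set (List α)) :
    ℕ → (Fin k → List α) → Prop
  | i, v =>
    if h : i < k then
      if A.quant ⟨i, h⟩ then
        ∃ w ∈ S, A.SatFrom S (i + 1) (Function.update v ⟨i, h⟩ w)
      else
        ∀ w ∈ S, A.SatFrom S (i + 1) (Function.update v ⟨i, h⟩ w)
    else
      zipWord v ∈ A.aut.accepts
  termination_by i _ => k - i
  decreasing_by all_goals omega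

/-- A hyperword `S` is accepted by the NFH `A` if it satisfies the full
quantification condition of `A`. -/
def NFH.Accepts {α σ : Type} {k : ℕ} (A : NFH α σ k) (S : Set (List α)) : Prop :=
  A.SatFrom S 0 fun _ => []

/-- The hyperlanguage of an NFH: the set of all nonempty hyperwords it accepts. -/
def NFH.hyperLang {α σ : Type} {k : ℕ} (A : NFH α σ k) : Set (Set (List α)) :=
  { S | S.Nonempty ∧ A.Accepts S }

namespace NFH

variable {α σ : Type} {k : ℕ} {A : NFH α σ k} {S S' : Set (List α)}

theorem satFrom_iff_of_le {i : ℕ} {v : Fin k → List α} (hi : k ≤ i) :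
    A.SatFrom S i v ↔ zipWord v ∈ A.aut.accepts := by
  rw [SatFrom, dif_neg hi.not_gt]

theorem satFrom_iff_exists {i : ℕ} {v : Fin k → List α} (hi : i < k)
    (hq : A.quant ⟨i, hi⟩ = true) :
    A.SatFrom S i v ↔ ∃ w ∈ S, A.SatFrom S (i + 1) (Function.update v ⟨i, hi⟩ w) := by
  rw [SatFrom, dif_pos hi, if_pos hq]

theorem SatFrom.mono {i : ℕ} {v : Fin k → List α}
    (hq : ∀ j : Fin k, i ≤ j → A.quant j = true) (hsub : S ⊆ S')
    (h : A.SatFrom S i v) : A.SatFrom S' i v := by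
  rcases lt_or_ge i k with hi | hi
  · have hqi : A.quant ⟨i, hi⟩ = true := hq ⟨i, hi⟩ le_rfl
    obtain ⟨w, hw, hsat⟩ := (satFrom_iff_exists hi hqi).1 h
    have hsat' : A.SatFrom S' (i + 1) (Function.update v ⟨i, hi⟩ w) :=
      hsat.mono (fun j hj => hq j (Nat.le_of_succ_le hj)) hsub
    exact (satFrom_iff_exists hi hqi).2 ⟨w, hsub hw, hsat'⟩
  · exact (satFrom_iff_of_le hi).2 ((satFrom_iff_of_le hi).1 h)
termination_by k - i

end NFH

/-- **Upward closure for NFH_∃.** If `A` is an NFH all of whose quantifiers are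
∃, `S ∈ 𝓛(A)`, and `S ⊆ S'`, then `S' ∈ 𝓛(A)`. -/
theorem nfhE_upward_closed {α σ : Type} {k : ℕ} (A : NFH α σ k)
    (hq : ∀ i : Fin k, A.quant i = true)
    (S S' : Set (List α)) (hS : S ∈ A.hyperLang) (hsub : S ⊆ S') :
    S' ∈ A.hyperLang := by
  obtain ⟨hne, hacc⟩ := hS
  exact ⟨hne.mono hsub, NFH.SatFrom.mono (fun i _ => hq i) hsub hacc⟩
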